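/- (Remark 5(i)) Suppose n is even, λ = 1/2, and p ≥ 1. Then the bilinear map (φ,ψ) ↦ T_p(C^{1/2}_p(S_p φ, S_p ψ)) on A × A is still bidifferential (even though S_p need not be invertible on all of A when n is even). -/

import Mathlib

open MvPolynomial

/-- The polynomial symbol algebra `A = ℂ[u₁,…,uₙ,ξ₁,…,ξₙ]`: variables `Sum.inl i` are the
`uᵢ` and variables `Sum.inr i` are the `ξᵢ`. -/
abbrev PolA (n : ℕ) := MvPolynomial (Fin n ⊕ Fin n) ℂ

namespace LO

/-- ξ-degree of a monomial exponent. -/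
def xiDeg {n : ℕ} (d : (Fin n ⊕ Fin n) →₀ ℕ) : ℕ :=
  ∑ i : Fin n, d (Sum.inr i)

/-- `c(E)`: the operator multiplying the ξ-degree-`m` component by `c m`. -/
noncomputable def cE {n : ℕ} (c : ℕ → ℂ) (φ : PolA n) : PolA n :=
  ∑ d ∈ φ.support, monomial d (c (xiDeg d) * coeff d φ)

/-- `D = Σᵢ ∂²/∂uᵢ∂ξᵢ`. -/
noncomputable def Dop {n : ℕ} (φ : PolA n) : PolA n :=
  ∑ i : Fin n, pderiv (Sum.inl i) (pderiv (Sum.inr i) φ)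

/-- The scalar `h^λ_d(m)`. -/
noncomputable def hScal (n : ℕ) (lam : ℂ) (d m : ℕ) : ℂ :=
  (d.factorial : ℂ)⁻¹ *
    ∏ j ∈ Finset.range d,
      ((m : ℂ) + (j : ℂ) + lam * ((n : ℂ) + 1)) /
        (2 * (m : ℂ) + (j : ℂ) + (n : ℂ) + (d : ℂ))

/-- The scalar `g^λ_d(m)`. -/
noncomputable def gScal (n : ℕ) (lam : ℂ) (d m : ℕ) : ℂ :=
  (d.factorial : ℂ)⁻¹ *
    ∏ j ∈ Finset.range d,
      (-(m : ℂ) - (j : ℂ) - lam * ((n : ℂ) + 1)) /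
        (2 * (m : ℂ) + (j : ℂ) + (n : ℂ) + 1)

/-- `bh^λ_d = h^λ_d(E) ∘ D^d` (equal to the identity for `d = 0`). -/
noncomputable def bh {n : ℕ} (lam : ℂ) (d : ℕ) (φ : PolA n) : PolA n :=
  cE (hScal n lam d) (Dop^[d] φ)

/-- `bg^λ_d = g^λ_d(E) ∘ D^d` (equal to the identity for `d = 0`). -/
noncomputable def bg {n : ℕ} (lam : ℂ) (d : ℕ) (φ : PolA n) : PolA n :=
  cE (gScal n lam d) (Dop^[d] φ)

/-- `N_k(φ,ψ) = (1/k!) Σ_{α ∈ {1,…,n}^k} ∂^kφ/∂ξ_α · ∂^kψ/∂u_α`. -/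
noncomputable def Nop {n : ℕ} (k : ℕ) (φ ψ : PolA n) : PolA n :=
  (k.factorial : ℂ)⁻¹ •
    ∑ α : Fin k → Fin n,
      ((List.ofFn α).foldr (fun i acc => pderiv (Sum.inr i) acc) φ) *
      ((List.ofFn α).foldr (fun i acc => pderiv (Sum.inl i) acc) ψ)

/-- The coefficient `C^λ_p` of the Lecomte–Ovsienko star product. -/
noncomputable def C (n : ℕ) (lam : ℂ) (p : ℕ) (φ ψ : PolA n) : PolA n :=
  ∑ i ∈ Finset.range (p + 1), ∑ j ∈ Finset.range (p + 1),
    ∑ k ∈ Finset.range (p + 1), ∑ m ∈ Finset.range (p + 1),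
      if i + j + k + m = p then bg lam m (Nop k (bh lam i φ) (bh lam j ψ)) else 0

/-- The Poisson bracket `{φ,ψ}`. -/
noncomputable def pb {n : ℕ} (φ ψ : PolA n) : PolA n :=
  ∑ i : Fin n,
    (pderiv (Sum.inr i) φ * pderiv (Sum.inl i) ψ
      - pderiv (Sum.inl i) φ * pderiv (Sum.inr i) ψ)

/-- `φ ∈ A^m` (ξ-homogeneous of degree `m`; for `m < 0` this forces `φ = 0`). -/
def IsXiHomog {n : ℕ} (m : ℤ) (φ : PolA n) : Prop :=
  ∀ d ∈ φ.support, (xiDeg d : ℤ) = m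

/-- The set of spanning momentum functions of the projective `sl_{n+1}(ℝ)`-action. -/
noncomputable def momSet (n : ℕ) : Set (PolA n) :=
  (Set.range fun i : Fin n => (X (Sum.inr i) : PolA n)) ∪
  (Set.range fun ij : Fin n × Fin n =>
    (X (Sum.inl ij.1) * X (Sum.inr ij.2) : PolA n)) ∪
  (Set.range fun i : Fin n =>
    (X (Sum.inl i) * ∑ k : Fin n, X (Sum.inl k) * X (Sum.inr k) : PolA n))

/-- The span `M` of the momentum functions. -/
noncomputable def momSpan (n : ℕ) : Submodule ℂ (PolA n) := Submodule.span ℂ (momSet n)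

/-- The Weyl algebra `W` of differential operators with polynomial coefficients,
as a subalgebra of `End_ℂ(A)`. -/
noncomputable def Weyl (n : ℕ) : Subalgebra ℂ (Module.End ℂ (PolA n)) :=
  Algebra.adjoin ℂ
    ((Set.range fun i : Fin n =>
        (LinearMap.mulLeft ℂ (X (Sum.inl i)) : Module.End ℂ (PolA n))) ∪
     (Set.range fun i : Fin n =>
        (LinearMap.mulLeft ℂ (X (Sum.inr i)) : Module.End ℂ (PolA n))) ∪
     (Set.range fun v : Fin n ⊕ Fin n =>
        ((pderiv v).toLinearMap : Module.End ℂ (PolA n))))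

/-- A bilinear map `B : A × A → A` is bidifferential if it is a finite sum
`B(φ,ψ) = Σ_α A_α(φ)·B_α(ψ)` with `A_α, B_α` in the Weyl algebra. -/
def Bidiff (n : ℕ) (B : PolA n → PolA n → PolA n) : Prop :=
  ∃ (N : ℕ) (Aop Bop : Fin N → Weyl n),
    ∀ φ ψ : PolA n,
      B φ ψ = ∑ α : Fin N,
        (Aop α : Module.End ℂ (PolA n)) φ * (Bop α : Module.End ℂ (PolA n)) ψ

/-- The scalar by which `T_p = ∏_{i=1}^{⌊p/2⌋}(E'+i)` acts on `A^m`. -/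
noncomputable def TScal (n p m : ℕ) : ℂ :=
  ∏ i ∈ Finset.Icc 1 (p / 2), ((m : ℂ) + (n : ℂ) / 2 + (i : ℂ))

/-- The scalar by which `S_p = ∏_{i=1}^{⌊p/2⌋}(E'−i)` acts on `A^m`. -/
noncomputable def SScal (n p m : ℕ) : ℂ :=
  ∏ i ∈ Finset.Icc 1 (p / 2), ((m : ℂ) + (n : ℂ) / 2 - (i : ℂ))

/-- The operator `T_p`. -/
noncomputable def Tp (n p : ℕ) : PolA n → PolA n := cE (TScal n p)

/-- The operator `S_p`. -/
noncomputable def Sp (n p : ℕ) : PolA n → PolA n := cE (SScal n p)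

/-- The fiberwise Euler operator `E = Σ ξᵢ ∂/∂ξᵢ` as an endomorphism. -/
noncomputable def Elin (n : ℕ) : Module.End ℂ (PolA n) :=
  ∑ i : Fin n,
    (LinearMap.mulLeft ℂ (X (Sum.inr i)) : Module.End ℂ (PolA n)) ∘ₗ
      (pderiv (Sum.inr i)).toLinearMap

/-- `E' = E + n/2` as an endomorphism. -/
noncomputable def E'lin (n : ℕ) : Module.End ℂ (PolA n) :=
  Elin n + ((n : ℂ) / 2) • 1

/-- `D` as an endomorphism. -/
noncomputable def Dlin (n : ℕ) : Module.End ℂ (PolA n) :=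
  ∑ i : Fin n,
    ((pderiv (Sum.inl i)).toLinearMap : Module.End ℂ (PolA n)) ∘ₗ
      (pderiv (Sum.inr i)).toLinearMap

/-- `L^{(m)} = −(1/16)(ξ_m∘D − 2E'∘∂/∂u_m)∘D`. -/
noncomputable def Lop (n : ℕ) (m : Fin n) : Module.End ℂ (PolA n) :=
  (-(1 / 16 : ℂ)) •
    (((LinearMap.mulLeft ℂ (X (Sum.inr m)) : Module.End ℂ (PolA n)) ∘ₗ Dlin n
        - (2 : ℂ) • (E'lin n ∘ₗ (pderiv (Sum.inl m)).toLinearMap)) ∘ₗ Dlin n)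

end LO

namespace LO

theorem coeff_cE {n : ℕ} (c : ℕ → ℂ) (φ : PolA n) (d : (Fin n ⊕ Fin n) →₀ ℕ) :
    coeff d (cE c φ) = c (xiDeg d) * coeff d φ := by
  classical
  unfold cE
  rw [coeff_sum]
  simp only [coeff_monomial]
  rw [Finset.sum_ite_eq']
  split_ifs with h
  · rfl
  · rw [notMem_support_iff.mp h, mul_zero]

/-- `cE c` as a linear map. -/
noncomputable def cEL (n : ℕ) (c : ℕ → ℂ) : Module.End ℂ (PolA n) where
  toFun := cE c
  map_add' x y := by
    ext d
    simp only [coeff_cE, coeff_add]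
    ring
  map_smul' a x := by
    ext d
    simp only [coeff_cE, coeff_smul, smul_eq_mul, RingHom.id_apply]
    ring

theorem cEL_apply {n : ℕ} (c : ℕ → ℂ) (φ : PolA n) : cEL n c φ = cE c φ := rfl

theorem cE_monomial {n : ℕ} (c : ℕ → ℂ) (d : (Fin n ⊕ Fin n) →₀ ℕ) (a : ℂ) :
    cE c (monomial d a) = monomial d (c (xiDeg d) * a) := by
  classical
  ext e
  rw [coeff_cE, coeff_monomial, coeff_monomial]
  split_ifs with h
  · rw [h]
  · simp

theorem cEL_mul {n : ℕ} (c c' : ℕ → ℂ) :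
    cEL n (fun m => c m * c' m) = cEL n c * cEL n c' := by
  refine LinearMap.ext fun φ => ?_
  ext d
  simp only [Module.End.mul_apply, cEL_apply, coeff_cE]
  ring

theorem cEL_add {n : ℕ} (c c' : ℕ → ℂ) :
    cEL n (fun m => c m + c' m) = cEL n c + cEL n c' := by
  refine LinearMap.ext fun φ => ?_
  ext d
  simp only [LinearMap.add_apply, cEL_apply, coeff_cE, coeff_add]
  ring

theorem cEL_const {n : ℕ} (a : ℂ) :
    cEL n (fun _ => a) = a • (1 : Module.End ℂ (PolA n)) := by
  refine LinearMap.ext fun φ => ?_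
  ext d
  simp only [LinearMap.smul_apply, cEL_apply, coeff_cE, coeff_smul, Module.End.one_apply,
    smul_eq_mul]

theorem Elin_eq (n : ℕ) : cEL n (fun m => (m : ℂ)) = Elin n := by
  refine LinearMap.ext fun φ => ?_
  induction φ using MvPolynomial.induction_on' with
  | monomial d a =>
    rw [cEL_apply, cE_monomial]
    have h : Elin n (monomial d a) = ∑ i : Fin n, X (Sum.inr i) * pderiv (Sum.inr i) (monomial d a) := by
      simp only [Elin, LinearMap.sum_apply]
      rfl
    rw [h]
    simp only [X_mul_pderiv_monomial, xiDeg]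
    rw [← Finset.sum_smul, ← nsmul_eq_mul, map_nsmul]
  | add p q hp hq => rw [map_add, map_add, hp, hq]

theorem pderiv_mem (n : ℕ) (v : Fin n ⊕ Fin n) :
    ((pderiv v).toLinearMap : Module.End ℂ (PolA n)) ∈ Weyl n :=
  Algebra.subset_adjoin (Or.inr ⟨v, rfl⟩)

theorem Elin_mem (n : ℕ) : Elin n ∈ Weyl n := by
  refine Subalgebra.sum_mem _ fun i _ => ?_
  exact Subalgebra.mul_mem _ (Algebra.subset_adjoin (Or.inl (Or.inr ⟨i, rfl⟩))) (pderiv_mem n _)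

theorem Dlin_mem (n : ℕ) : Dlin n ∈ Weyl n := by
  refine Subalgebra.sum_mem _ fun i _ => ?_
  exact Subalgebra.mul_mem _ (pderiv_mem n _) (pderiv_mem n _)

theorem Dlin_apply {n : ℕ} (φ : PolA n) : Dlin n φ = Dop φ := by
  simp [Dlin, Dop]

theorem Dlin_pow_apply {n : ℕ} (d : ℕ) (φ : PolA n) : (Dlin n ^ d) φ = Dop^[d] φ := by
  rw [Module.End.pow_apply]
  congr 1
  funext φ
  exact Dlin_apply φ

/-- `c(E)` lies in the Weyl algebra. -/
def Good (n : ℕ) (c : ℕ → ℂ) : Prop := cEL n c ∈ Weyl n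

theorem Good.const (n : ℕ) (a : ℂ) : Good n (fun _ => a) := by
  unfold Good
  rw [cEL_const]
  exact Subalgebra.smul_mem _ (Subalgebra.one_mem _) _

theorem Good.id (n : ℕ) : Good n (fun m => (m : ℂ)) := by
  unfold Good
  rw [Elin_eq]
  exact Elin_mem n

theorem Good.add {n : ℕ} {c c' : ℕ → ℂ} (h : Good n c) (h' : Good n c') :
    Good n (fun m => c m + c' m) := by
  unfold Good
  rw [cEL_add]
  exact Subalgebra.add_mem _ h h'

theorem Good.mul {n : ℕ} {c c' : ℕ → ℂ} (h : Good n c) (h' : Good n c') :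
    Good n (fun m => c m * c' m) := by
  unfold Good
  rw [cEL_mul]
  exact Subalgebra.mul_mem _ h h'

theorem Good.prod {n : ℕ} {ι : Type} (s : Finset ι) (f : ι → ℕ → ℂ) (h : ∀ i, Good n (f i)) :
    Good n (fun m => ∏ i ∈ s, f i m) := by
  classical
  induction s using Finset.induction_on with
  | empty => simpa using Good.const n 1
  | insert a s ha ih =>
    simp only [Finset.prod_insert ha]
    exact (h a).mul ih

theorem Good.lin (n : ℕ) (a : ℂ) : Good n (fun m => (m : ℂ) + a) :=
  (Good.id n).add (Good.const n a)

theorem pderiv_cE {n : ℕ} (c : ℕ → ℂ) (φ : PolA n) :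
    Dop (cE c φ) = cE (fun m => c (m + 1)) (Dop φ) := by
  classical
  rw [← Dlin_apply, ← Dlin_apply, ← cEL_apply, ← cEL_apply]
  simp only [← Module.End.mul_apply]
  congr 1
  refine LinearMap.ext fun φ => ?_
  induction φ using MvPolynomial.induction_on' with
  | monomial d a =>
    rw [Module.End.mul_apply, Module.End.mul_apply, cEL_apply, cE_monomial, Dlin_apply, Dlin_apply]
    unfold Dop
    rw [map_sum]
    refine Finset.sum_congr rfl fun i _ => ?_
    rw [cEL_apply]
    simp only [pderiv_monomial]
    rw [cE_monomial]
    by_cases h0 : d (Sum.inr i) = 0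
    · simp [h0]
    · have : xiDeg (d - Finsupp.single (Sum.inr i) 1 - Finsupp.single (Sum.inl i) 1) + 1
          = xiDeg d := by
        unfold xiDeg
        rw [← Finset.add_sum_erase _ _ (Finset.mem_univ i),
          ← Finset.add_sum_erase Finset.univ (fun j => d (Sum.inr j)) (Finset.mem_univ i)]
        have : ∀ j ∈ Finset.univ.erase i,
            (d - Finsupp.single (Sum.inr i) 1 - Finsupp.single (Sum.inl i) 1 :
              (Fin n ⊕ Fin n) →₀ ℕ) (Sum.inr j)
              = d (Sum.inr j) := by
          intro j hj
          have hj' : i ≠ j := fun h => (Finset.ne_of_mem_erase hj) h.symm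
          simp [Finsupp.single_apply, hj']
        rw [Finset.sum_congr rfl this]
        simp
        omega
      rw [this]
      congr 1
      ring
  | add p q hp hq => rw [map_add, map_add, hp, hq]

theorem iter_cE {n : ℕ} (c : ℕ → ℂ) (d : ℕ) (φ : PolA n) :
    Dop^[d] (cE c φ) = cE (fun m => c (m + d)) (Dop^[d] φ) := by
  induction d generalizing φ c with
  | zero => rfl
  | succ d ih =>
    rw [Function.iterate_succ_apply, Function.iterate_succ_apply, pderiv_cE, ih]
    congr 1

theorem prod_even (f : ℕ → ℂ) (e : ℕ) :
    ∏ j ∈ Finset.range (2 * e), f j = ∏ i ∈ Finset.range e, (f (2 * i) * f (2 * i + 1)) := by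
  induction e with
  | zero => simp
  | succ e ih =>
    rw [show 2 * (e + 1) = 2 * e + 1 + 1 by ring, Finset.prod_range_succ, Finset.prod_range_succ,
      ih, Finset.prod_range_succ]
    ring

theorem prod_Icc (f : ℕ → ℂ) (e : ℕ) :
    ∏ i ∈ Finset.Icc 1 e, f i = ∏ i ∈ Finset.range e, f (i + 1) := by
  induction e with
  | zero => simp
  | succ e ih => rw [Finset.prod_Icc_succ_top (by omega), ih, Finset.prod_range_succ]

theorem prod_Icc' (f : ℕ → ℂ) (e : ℕ) :
    ∏ i ∈ Finset.Icc 1 e, f i = ∏ i ∈ Finset.range e, f (e - i) := by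
  rw [prod_Icc, ← Finset.prod_range_reflect]
  refine Finset.prod_congr rfl fun i hi => ?_
  have := Finset.mem_range.mp hi
  congr 1
  omega

theorem h_core (d : ℕ) (x : ℂ) :
    (∏ j ∈ Finset.range d, (x + j + 1 / 2)) * ∏ i ∈ Finset.Icc 1 (d / 2), (x + d - i)
      = ((1 / 2) ^ d * ∏ j ∈ Finset.range (d / 2), (x + j + 1 / 2)) *
        ∏ j ∈ Finset.range d, (2 * x + d + j) := by
  rw [prod_Icc']
  obtain ⟨e, he | he⟩ := Nat.even_or_odd' d
  · have hd : d / 2 = e := by omega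
    rw [hd]
    subst he
    rw [prod_even (fun j => 2 * x + ((2 * e : ℕ) : ℂ) + (j : ℂ))]
    rw [show Finset.range (2 * e) = Finset.range (e + e) by rw [two_mul], Finset.prod_range_add,
      pow_mul]
    have : ((1 / 2 : ℂ) ^ 2) ^ e = ∏ i ∈ Finset.range e, (1 / 2 : ℂ) ^ 2 := by simp
    rw [this, mul_assoc, mul_comm (∏ i ∈ Finset.range e, (1 / 2 : ℂ) ^ 2), mul_assoc]
    congr 1
    rw [← Finset.prod_mul_distrib, ← Finset.prod_mul_distrib]
    refine Finset.prod_congr rfl fun i hi => ?_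
    have := Finset.mem_range.mp hi
    push_cast [Nat.cast_sub this.le]
    ring
  · have hd : d / 2 = e := by omega
    rw [hd]
    subst he
    rw [Finset.prod_range_succ (fun j => 2 * x + ((2 * e + 1 : ℕ) : ℂ) + (j : ℂ)),
      prod_even (fun j => 2 * x + ((2 * e + 1 : ℕ) : ℂ) + (j : ℂ))]
    rw [show Finset.range (2 * e + 1) = Finset.range (e + (e + 1)) by congr 1; ring,
      Finset.prod_range_add, Finset.prod_range_succ, pow_succ, pow_mul]
    have : ((1 / 2 : ℂ) ^ 2) ^ e = ∏ i ∈ Finset.range e, (1 / 2 : ℂ) ^ 2 := by simp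
    rw [this]
    have key : (∏ i ∈ Finset.range e, (x + ((e + i : ℕ) : ℂ) + 1 / 2)) *
        ∏ i ∈ Finset.range e, (x + ((2 * e + 1 : ℕ) : ℂ) - ((e - i : ℕ) : ℂ))
        = (∏ i ∈ Finset.range e, (1 / 2 : ℂ) ^ 2) * ∏ i ∈ Finset.range e,
          ((2 * x + ((2 * e + 1 : ℕ) : ℂ) + ((2 * i : ℕ) : ℂ)) *
            (2 * x + ((2 * e + 1 : ℕ) : ℂ) + ((2 * i + 1 : ℕ) : ℂ))) := by
      rw [← Finset.prod_mul_distrib, ← Finset.prod_mul_distrib]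
      refine Finset.prod_congr rfl fun i hi => ?_
      have := Finset.mem_range.mp hi
      push_cast [Nat.cast_sub this.le]
      ring
    have e2 : x + ((e + e : ℕ) : ℂ) + 1 / 2
        = 1 / 2 * (2 * x + ((2 * e + 1 : ℕ) : ℂ) + ((2 * e : ℕ) : ℂ)) := by
      push_cast
      ring
    rw [e2]
    linear_combination ((∏ j ∈ Finset.range e, (x + j + 1 / 2)) *
      (1 / 2 * (2 * x + ((2 * e + 1 : ℕ) : ℂ) + ((2 * e : ℕ) : ℂ)))) * key

theorem g_core (d : ℕ) (x : ℂ) :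
    (∏ j ∈ Finset.range d, (-(x + j + 1 / 2))) * ∏ i ∈ Finset.Icc 1 (d / 2), (x + i)
      = ((-1 / 2) ^ d * ∏ j ∈ Finset.range (d / 2), (x + ((d + 1) / 2 + j : ℕ) + 1 / 2)) *
        ∏ j ∈ Finset.range d, (2 * x + j + 1) := by
  rw [prod_Icc]
  obtain ⟨e, he | he⟩ := Nat.even_or_odd' d
  · have hd : d / 2 = e := by omega
    have hd' : (d + 1) / 2 = e := by omega
    rw [hd, hd']
    subst he
    rw [prod_even (fun j => 2 * x + (j : ℂ) + 1)]
    rw [show Finset.range (2 * e) = Finset.range (e + e) by rw [two_mul], Finset.prod_range_add,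
      pow_mul]
    have : ((-1 / 2 : ℂ) ^ 2) ^ e = ∏ i ∈ Finset.range e, (-1 / 2 : ℂ) ^ 2 := by simp
    rw [this]
    simp only [← Finset.prod_mul_distrib]
    refine Finset.prod_congr rfl fun i hi => ?_
    push_cast
    ring
  · have hd : d / 2 = e := by omega
    have hd' : (d + 1) / 2 = e + 1 := by omega
    rw [hd, hd']
    subst he
    rw [Finset.prod_range_succ (fun j => 2 * x + (j : ℂ) + 1),
      prod_even (fun j => 2 * x + (j : ℂ) + 1)]
    rw [show Finset.range (2 * e + 1) = Finset.range ((e + 1) + e) by congr 1; ring,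
      Finset.prod_range_add, Finset.prod_range_succ, pow_succ, pow_mul]
    have : ((-1 / 2 : ℂ) ^ 2) ^ e = ∏ i ∈ Finset.range e, (-1 / 2 : ℂ) ^ 2 := by simp
    rw [this]
    have key : ((∏ i ∈ Finset.range e, (-(x + (i : ℂ) + 1 / 2))) *
        ∏ i ∈ Finset.range e, (-(x + ((e + 1 + i : ℕ) : ℂ) + 1 / 2))) *
        ∏ i ∈ Finset.range e, (x + ((i + 1 : ℕ) : ℂ))
        = ((∏ i ∈ Finset.range e, (-1 / 2 : ℂ) ^ 2) *
          ∏ i ∈ Finset.range e, (x + ((e + 1 + i : ℕ) : ℂ) + 1 / 2)) * ∏ i ∈ Finset.range e,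
          ((2 * x + ((2 * i : ℕ) : ℂ) + 1) * (2 * x + ((2 * i + 1 : ℕ) : ℂ) + 1)) := by
      simp only [← Finset.prod_mul_distrib]
      refine Finset.prod_congr rfl fun i hi => ?_
      push_cast
      ring
    have e2 : -(x + (e : ℂ) + 1 / 2) = -1 / 2 * (2 * x + ((2 * e : ℕ) : ℂ) + 1) := by
      push_cast
      ring
    rw [e2]
    linear_combination (-1 / 2 * (2 * x + ((2 * e : ℕ) : ℂ) + 1)) * key

theorem prod_split (f : ℕ → ℂ) {a b : ℕ} (h : a ≤ b) :
    ∏ i ∈ Finset.Icc 1 b, f i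
      = (∏ i ∈ Finset.Icc 1 a, f i) * ∏ i ∈ Finset.Icc 1 b \ Finset.Icc 1 a, f i := by
  rw [mul_comm, Finset.prod_sdiff (Finset.Icc_subset_Icc_right h)]

theorem h_good (n : ℕ) (hn : 1 ≤ n) (p d : ℕ) (hd : d ≤ p) :
    Good n (fun m => hScal n (1 / 2) d m * SScal n p (m + d)) := by
  have key : (fun m => hScal n (1 / 2) d m * SScal n p (m + d)) = fun m : ℕ =>
      ((d.factorial : ℂ)⁻¹ * ((1 / 2) ^ d * ∏ j ∈ Finset.range (d / 2),
        ((m : ℂ) + ((n : ℂ) / 2 + j + 1 / 2)))) *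
      ∏ i ∈ Finset.Icc 1 (p / 2) \ Finset.Icc 1 (d / 2), ((m : ℂ) + ((n : ℂ) / 2 + d - i)) := by
    funext m
    unfold hScal SScal
    rw [prod_split _ (Nat.div_le_div_right hd : d / 2 ≤ p / 2), ← mul_assoc]
    congr 1
    · rw [mul_assoc]
      congr 1
      rw [Finset.prod_div_distrib, div_mul_eq_mul_div, div_eq_iff]
      · have := h_core d ((m : ℂ) + n / 2)
        convert this using 2
        · refine Finset.prod_congr rfl fun i _ => ?_
          ring
        · refine Finset.prod_congr rfl fun i _ => ?_
          push_cast
          ring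
        · congr 1
          refine Finset.prod_congr rfl fun i _ => ?_
          ring
        · refine Finset.prod_congr rfl fun i _ => ?_
          ring
      · refine Finset.prod_ne_zero_iff.mpr fun j _ => ?_
        have : (2 * m + j + n + d : ℕ) ≠ 0 := by omega
        exact_mod_cast this
    · refine Finset.prod_congr rfl fun i _ => ?_
      push_cast
      ring
  rw [key]
  exact ((Good.const n _).mul ((Good.const n _).mul (Good.prod _ _ fun i => Good.lin n _))).mul
    (Good.prod _ _ fun i => Good.lin n _)

theorem g_good (n : ℕ) (p d : ℕ) (hd : d ≤ p) :
    Good n (fun m => TScal n p m * gScal n (1 / 2) d m) := by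
  have key : (fun m => TScal n p m * gScal n (1 / 2) d m) = fun m : ℕ =>
      ((d.factorial : ℂ)⁻¹ * ((-1 / 2) ^ d * ∏ j ∈ Finset.range (d / 2),
        ((m : ℂ) + ((n : ℂ) / 2 + ((d + 1) / 2 + j : ℕ) + 1 / 2)))) *
      ∏ i ∈ Finset.Icc 1 (p / 2) \ Finset.Icc 1 (d / 2), ((m : ℂ) + ((n : ℂ) / 2 + i)) := by
    funext m
    rw [mul_comm]
    unfold gScal TScal
    rw [prod_split _ (Nat.div_le_div_right hd : d / 2 ≤ p / 2), ← mul_assoc]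
    congr 1
    · rw [mul_assoc]
      congr 1
      rw [Finset.prod_div_distrib, div_mul_eq_mul_div, div_eq_iff]
      · have := g_core d ((m : ℂ) + n / 2)
        convert this using 2
        · refine Finset.prod_congr rfl fun i _ => ?_
          ring
        · congr 1
          refine Finset.prod_congr rfl fun i _ => ?_
          ring
        · refine Finset.prod_congr rfl fun i _ => ?_
          ring
      · refine Finset.prod_ne_zero_iff.mpr fun j _ => ?_
        have : (2 * m + j + n + 1 : ℕ) ≠ 0 := by omega
        exact_mod_cast this
    · refine Finset.prod_congr rfl fun i _ => ?_
      ring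
  rw [key]
  exact ((Good.const n _).mul ((Good.const n _).mul (Good.prod _ _ fun i => Good.lin n _))).mul
    (Good.prod _ _ fun i => Good.lin n _)

/-- The space of bidifferential maps. -/
noncomputable def BD (n : ℕ) : Submodule ℂ (PolA n → PolA n → PolA n) :=
  Submodule.span ℂ {B | ∃ a ∈ Weyl n, ∃ b ∈ Weyl n, B = fun φ ψ => a φ * b ψ}

theorem BD.bidiff {n : ℕ} {B : PolA n → PolA n → PolA n} (h : B ∈ BD n) : Bidiff n B := by
  obtain ⟨N, f, g, rfl⟩ := (Submodule.mem_span_set' (R := ℂ)).mp h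
  choose a ha b hb hg using fun i => (g i).2
  refine ⟨N, fun i => ⟨f i • a i, Subalgebra.smul_mem _ (ha i) _⟩, fun i => ⟨b i, hb i⟩, ?_⟩
  intro φ ψ
  simp only [Finset.sum_apply, Pi.smul_apply, hg, LinearMap.smul_apply, smul_mul_assoc]

theorem BD.base {n : ℕ} {a b : Module.End ℂ (PolA n)} (ha : a ∈ Weyl n) (hb : b ∈ Weyl n) :
    (fun φ ψ => a φ * b ψ) ∈ BD n :=
  Submodule.subset_span ⟨a, ha, b, hb, rfl⟩

/-- Post-composition. -/
noncomputable def post {n : ℕ} (w : Module.End ℂ (PolA n)) :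
    (PolA n → PolA n → PolA n) →ₗ[ℂ] (PolA n → PolA n → PolA n) where
  toFun B := fun φ ψ => w (B φ ψ)
  map_add' x y := by
    funext φ ψ
    simp
  map_smul' a x := by
    funext φ ψ
    simp

theorem post_of_base {n : ℕ} (w : Module.End ℂ (PolA n))
    (h : ∀ a ∈ Weyl n, ∀ b ∈ Weyl n, (fun φ ψ => w (a φ * b ψ)) ∈ BD n) :
    ∀ B ∈ BD n, post w B ∈ BD n := by
  intro B hB
  have : BD n ≤ (BD n).comap (post w) := by
    refine Submodule.span_le.mpr ?_
    rintro _ ⟨a, ha, b, hb, rfl⟩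
    exact h a ha b hb
  exact this hB

theorem BD.post_mem {n : ℕ} {w : Module.End ℂ (PolA n)} (hw : w ∈ Weyl n) :
    ∀ B ∈ BD n, post w B ∈ BD n := by
  induction hw using Algebra.adjoin_induction with
  | mem x hx =>
    refine post_of_base x fun a ha b hb => ?_
    rcases hx with (⟨i, rfl⟩ | ⟨i, rfl⟩) | ⟨v, rfl⟩
    · have := BD.base (Subalgebra.mul_mem _
        (Algebra.subset_adjoin (Or.inl (Or.inl ⟨i, rfl⟩)) : _ ∈ Weyl n) ha) hb
      convert this using 3
      simp [mul_assoc]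
    · have := BD.base (Subalgebra.mul_mem _
        (Algebra.subset_adjoin (Or.inl (Or.inr ⟨i, rfl⟩)) : _ ∈ Weyl n) ha) hb
      convert this using 3
      simp [mul_assoc]
    · have := (BD n).add_mem (BD.base (Subalgebra.mul_mem _ (pderiv_mem n v) ha) hb)
        (BD.base ha (Subalgebra.mul_mem _ (pderiv_mem n v) hb))
      convert this using 1
      funext φ ψ
      simp [Derivation.leibniz]
      ring
  | algebraMap r =>
    intro B hB
    exact (BD n).smul_mem r hB
  | add x y _ _ hx hy =>
    intro B hB
    exact (BD n).add_mem (hx B hB) (hy B hB)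
  | mul x y _ _ hx hy =>
    intro B hB
    exact hx _ (hy B hB)

theorem foldr_weyl {n : ℕ} (v : Fin n → Fin n ⊕ Fin n) (l : List (Fin n)) :
    ∃ w ∈ Weyl n, ∀ φ, l.foldr (fun i acc => pderiv (v i) acc) φ = w φ := by
  induction l with
  | nil => exact ⟨1, Subalgebra.one_mem _, fun φ => rfl⟩
  | cons i l ih =>
    obtain ⟨w, hw, h⟩ := ih
    refine ⟨_, Subalgebra.mul_mem _ (pderiv_mem n (v i)) hw, fun φ => ?_⟩
    rw [List.foldr_cons, h]
    rfl

theorem Nop_BD {n : ℕ} (k : ℕ) {a b : Module.End ℂ (PolA n)} (ha : a ∈ Weyl n)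
    (hb : b ∈ Weyl n) : (fun φ ψ => Nop k (a φ) (b ψ)) ∈ BD n := by
  have : (fun φ ψ => Nop k (a φ) (b ψ)) = (k.factorial : ℂ)⁻¹ • ∑ α : Fin k → Fin n,
      fun φ ψ => ((List.ofFn α).foldr (fun i acc => pderiv (Sum.inr i) acc) (a φ)) *
      ((List.ofFn α).foldr (fun i acc => pderiv (Sum.inl i) acc) (b ψ)) := by
    funext φ ψ
    simp only [Nop, Pi.smul_apply, Finset.sum_apply]
  rw [this]
  refine (BD n).smul_mem _ ((BD n).sum_mem fun α _ => ?_)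
  obtain ⟨w, hw, h⟩ := foldr_weyl (n := n) Sum.inr (List.ofFn α)
  obtain ⟨w', hw', h'⟩ := foldr_weyl (n := n) Sum.inl (List.ofFn α)
  have e : (fun φ ψ => ((List.ofFn α).foldr (fun i acc => pderiv (Sum.inr i) acc) (a φ)) *
      ((List.ofFn α).foldr (fun i acc => pderiv (Sum.inl i) acc) (b ψ)))
      = fun φ ψ => (w * a) φ * (w' * b) ψ := by
    funext φ ψ
    rw [h, h', Module.End.mul_apply, Module.End.mul_apply]
  rw [e]
  exact BD.base (Subalgebra.mul_mem _ hw ha) (Subalgebra.mul_mem _ hw' hb)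

theorem bh_Sp (n : ℕ) (hn : 1 ≤ n) (p d : ℕ) (hd : d ≤ p) :
    ∃ w ∈ Weyl n, ∀ φ, bh (1 / 2) d (Sp n p φ) = w φ := by
  refine ⟨_, Subalgebra.mul_mem _ (h_good n hn p d hd) (Subalgebra.pow_mem _ (Dlin_mem n) d), ?_⟩
  intro φ
  rw [bh, Sp, iter_cE, cEL_mul]
  simp only [Module.End.mul_apply, Dlin_pow_apply]
  rfl

theorem Tp_bg (n : ℕ) (p d : ℕ) (hd : d ≤ p) :
    ∃ w ∈ Weyl n, ∀ φ, Tp n p (bg (1 / 2) d φ) = w φ := by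
  refine ⟨_, Subalgebra.mul_mem _ (g_good n p d hd) (Subalgebra.pow_mem _ (Dlin_mem n) d), ?_⟩
  intro φ
  rw [bg, Tp, cEL_mul]
  simp only [Module.End.mul_apply, Dlin_pow_apply]
  rfl

theorem term_BD (n : ℕ) (hn : 1 ≤ n) (p i j k m : ℕ) (hi : i ≤ p) (hj : j ≤ p) (hm : m ≤ p) :
    (fun φ ψ => Tp n p (bg (1 / 2) m
      (Nop k (bh (1 / 2) i (Sp n p φ)) (bh (1 / 2) j (Sp n p ψ))))) ∈ BD n := by
  obtain ⟨w, hw, h⟩ := Tp_bg n p m hm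
  obtain ⟨a, ha, h1⟩ := bh_Sp n hn p i hi
  obtain ⟨b, hb, h2⟩ := bh_Sp n hn p j hj
  simp only [h, h1, h2]
  exact BD.post_mem hw _ (Nop_BD k ha hb)

theorem Tp_C (n : ℕ) (hn : 1 ≤ n) (p : ℕ) :
    (fun φ ψ => Tp n p (C n (1 / 2) p (Sp n p φ) (Sp n p ψ))) ∈ BD n := by
  have : (fun φ ψ => Tp n p (C n (1 / 2) p (Sp n p φ) (Sp n p ψ))) =
      ∑ i ∈ Finset.range (p + 1), ∑ j ∈ Finset.range (p + 1),
      ∑ k ∈ Finset.range (p + 1), ∑ m ∈ Finset.range (p + 1),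
      if i + j + k + m = p then (fun φ ψ => Tp n p (bg (1 / 2) m
      (Nop k (bh (1 / 2) i (Sp n p φ)) (bh (1 / 2) j (Sp n p ψ))))) else 0 := by
    funext φ ψ
    have hT : ∀ x, Tp n p x = cEL n (TScal n p) x := fun x => rfl
    simp only [Finset.sum_apply]
    rw [hT, C]
    simp only [map_sum]
    refine Finset.sum_congr rfl fun i _ => Finset.sum_congr rfl fun j _ =>
      Finset.sum_congr rfl fun k _ => Finset.sum_congr rfl fun m _ => ?_
    split_ifs
    · rfl
    · simp
  rw [this]
  refine (BD n).sum_mem fun i _ => (BD n).sum_mem fun j _ =>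
    (BD n).sum_mem fun k _ => (BD n).sum_mem fun m _ => ?_
  split_ifs
  · exact term_BD n hn p i j k m (by omega) (by omega) (by omega)
  · exact (BD n).zero_mem

end LO

/-- Remark 5(i): for `n` even and `p ≥ 1`, the bilinear map
`(φ,ψ) ↦ T_p(C^{1/2}_p(S_p φ, S_p ψ))` is still bidifferential. -/
theorem stmt_19 (n : ℕ) (hn : 1 ≤ n) (hne : Even n) (p : ℕ) (hp : 1 ≤ p) :
    LO.Bidiff n
      (fun φ ψ => LO.Tp n p (LO.C n (1 / 2) p (LO.Sp n p φ) (LO.Sp n p ψ))) := by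
  exact LO.BD.bidiff (LO.Tp_C n hn p)
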